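/- There is no real 14×94 matrix S of rank 6 whose rows are indexed by the vertices 0,1,…,13 and whose columns are indexed by the 94 facets of the abstract prismatoid #1963 of Criado and Santos (listed in the context), such that S_{ij} = 0 whenever vertex i belongs to facet j and S_{ij} > 0 whenever vertex i does not belong to facet j. Consequently, the prismatoid #1963 is not realizable as a 5-dimensional polytope. -/

import Mathlib

open Matrix

/-- The 94 facets (as vertex sets in `Fin 14`) of the abstract prismatoid #1963 of
Criado and Santos. -/
def prismatoidFacets : List (Finset (Fin 14)) := [
    {0, 1, 2, 3, 4, 5, 6},
    {7, 8, 9, 10, 11, 12, 13},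
    {0, 1, 2, 6, 10},
    {0, 1, 4, 7, 11},
    {0, 2, 3, 8, 10},
    {1, 2, 6, 9, 13},
    {1, 4, 7, 8, 11},
    {2, 4, 7, 9, 10},
    {2, 5, 8, 9, 10},
    {5, 7, 8, 10, 11},
    {0, 1, 2, 3, 10},
    {0, 2, 4, 7, 11},
    {1, 2, 3, 8, 10},
    {1, 2, 5, 9, 13},
    {2, 4, 7, 8, 11},
    {1, 2, 7, 9, 12},
    {2, 5, 8, 9, 11},
    {6, 7, 8, 11, 12},
    {0, 1, 3, 4, 11},
    {0, 1, 3, 7, 11},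
    {0, 2, 3, 8, 11},
    {1, 2, 5, 9, 12},
    {2, 4, 7, 8, 10},
    {2, 5, 7, 9, 12},
    {2, 6, 8, 9, 11},
    {3, 7, 8, 12, 13},
    {0, 2, 3, 4, 11},
    {0, 1, 4, 7, 12},
    {0, 2, 6, 8, 11},
    {0, 1, 5, 9, 12},
    {2, 5, 7, 8, 11},
    {2, 5, 7, 9, 10},
    {1, 3, 7, 9, 13},
    {5, 7, 9, 10, 11},
    {1, 2, 3, 4, 11},
    {0, 2, 4, 7, 12},
    {1, 2, 3, 8, 11},
    {0, 1, 3, 9, 12},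
    {2, 5, 7, 8, 10},
    {0, 5, 7, 9, 12},
    {1, 4, 7, 9, 13},
    {6, 7, 9, 11, 12},
    {0, 1, 4, 5, 12},
    {0, 2, 5, 7, 12},
    {1, 2, 4, 8, 11},
    {0, 1, 5, 9, 13},
    {1, 3, 7, 8, 11},
    {0, 5, 7, 9, 11},
    {1, 6, 8, 9, 13},
    {4, 7, 8, 9, 10},
    {0, 2, 4, 5, 12},
    {0, 2, 5, 7, 11},
    {1, 2, 4, 8, 10},
    {0, 2, 5, 9, 13},
    {0, 3, 7, 8, 11},
    {0, 6, 7, 9, 11},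
    {0, 6, 8, 9, 13},
    {5, 8, 9, 10, 11},
    {1, 2, 4, 5, 12},
    {1, 2, 4, 7, 12},
    {0, 1, 6, 8, 13},
    {0, 2, 5, 9, 11},
    {0, 6, 7, 8, 11},
    {0, 6, 7, 9, 12},
    {0, 6, 8, 9, 12},
    {6, 8, 9, 11, 12},
    {0, 1, 5, 6, 13},
    {0, 1, 3, 7, 12},
    {0, 1, 3, 8, 13},
    {0, 2, 6, 9, 13},
    {0, 3, 7, 8, 12},
    {1, 3, 7, 9, 12},
    {0, 3, 8, 9, 12},
    {3, 7, 9, 12, 13},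
    {0, 2, 5, 6, 13},
    {0, 1, 6, 8, 10},
    {1, 2, 6, 9, 10},
    {0, 2, 6, 9, 11},
    {0, 6, 7, 8, 12},
    {1, 6, 8, 9, 10},
    {1, 4, 8, 9, 13},
    {4, 7, 8, 9, 13},
    {1, 2, 5, 6, 13},
    {0, 2, 6, 8, 10},
    {1, 2, 4, 9, 10},
    {0, 1, 3, 9, 13},
    {1, 3, 7, 8, 13},
    {1, 4, 8, 9, 10},
    {0, 3, 8, 9, 13},
    {3, 8, 9, 12, 13},
    {0, 1, 3, 8, 10},
    {1, 2, 4, 7, 9},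
    {1, 4, 7, 8, 13},
    {2, 6, 8, 9, 10}
  ]

/-- The facet indexed by `j : Fin 94`. -/
def facet1963 (j : Fin 94) : Finset (Fin 14) :=
  prismatoidFacets.get (Fin.cast (by rfl) j)

/-- Cramer's rule, paired with a linear functional `w`. -/
lemma cram (r : Fin 6 → Fin 6 → ℝ) (y w : Fin 6 → ℝ) :
    (of r).det * (y ⬝ᵥ w) = ∑ p, (r p ⬝ᵥ w) * (of (Function.update r p y)).det := by
  have h := congrArg (fun z => z ⬝ᵥ w) (Matrix.mulVec_cramer (of r)ᵀ y)
  simp only [smul_dotProduct, det_transpose, smul_eq_mul] at h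
  rw [← h, Matrix.mulVec_transpose, ← Matrix.dotProduct_mulVec]
  simp only [dotProduct, mulVec]
  refine Finset.sum_congr rfl fun p _ => ?_
  rw [Matrix.cramer_transpose_apply, mul_comm]
  rfl

lemma exists_functional (r : Fin 6 → Fin 6 → ℝ) (p : Fin 6) :
    ∃ w : Fin 6 → ℝ, ∀ y, (of (Function.update r p y)).det = y ⬝ᵥ w := by
  let f : (Fin 6 → ℝ) →ₗ[ℝ] ℝ := (LinearMap.proj p).comp (Matrix.cramer (of r)ᵀ)
  refine ⟨fun k => f (fun j => if k = j then 1 else 0), fun y => ?_⟩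
  have h : (of (Function.update r p y)).det = f y :=
    (Matrix.cramer_transpose_apply (of r) y p).symm
  rw [h, LinearMap.pi_apply_eq_sum_univ f y]
  rfl

/-- The three-term Grassmann–Plücker relation. -/
lemma plucker (s0 s1 s2 s3 a b c d : Fin 6 → ℝ) :
    (of ![s0, s1, s2, s3, a, b]).det * (of ![s0, s1, s2, s3, c, d]).det
      - (of ![s0, s1, s2, s3, a, c]).det * (of ![s0, s1, s2, s3, b, d]).det
      + (of ![s0, s1, s2, s3, a, d]).det * (of ![s0, s1, s2, s3, b, c]).det = 0 := by
  obtain ⟨w, hw⟩ := exists_functional ![s0, s1, s2, s3, 0, d] 4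
  have hu : ∀ y, Function.update ![s0, s1, s2, s3, 0, d] 4 y = ![s0, s1, s2, s3, y, d] := by
    intro y; funext i; fin_cases i <;> rfl
  simp only [hu] at hw
  have h0 : s0 ⬝ᵥ w = 0 := by
    rw [← hw]; exact Matrix.det_zero_of_row_eq (i := 0) (j := 4) (by decide) rfl
  have h1 : s1 ⬝ᵥ w = 0 := by
    rw [← hw]; exact Matrix.det_zero_of_row_eq (i := 1) (j := 4) (by decide) rfl
  have h2 : s2 ⬝ᵥ w = 0 := by
    rw [← hw]; exact Matrix.det_zero_of_row_eq (i := 2) (j := 4) (by decide) rfl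
  have h3 : s3 ⬝ᵥ w = 0 := by
    rw [← hw]; exact Matrix.det_zero_of_row_eq (i := 3) (j := 4) (by decide) rfl
  have h := cram ![s0, s1, s2, s3, a, b] c w
  have e4 : Function.update ![s0, s1, s2, s3, a, b] 4 c = ![s0, s1, s2, s3, c, b] := by
    funext i; fin_cases i <;> rfl
  have e5 : Function.update ![s0, s1, s2, s3, a, b] 5 c = ![s0, s1, s2, s3, a, c] := by
    funext i; fin_cases i <;> rfl
  have hs : (of ![s0, s1, s2, s3, c, b]).det = - (of ![s0, s1, s2, s3, b, c]).det := by
    have := Matrix.det_permute (Equiv.swap 4 5) (of ![s0, s1, s2, s3, b, c])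
    rw [Equiv.Perm.sign_swap (by decide)] at this
    have e : (of ![s0, s1, s2, s3, b, c]).submatrix (Equiv.swap (4 : Fin 6) 5) id
        = of ![s0, s1, s2, s3, c, b] := by
      ext i j; fin_cases i <;> rfl
    rw [e] at this
    simpa using this
  rw [Fin.sum_univ_six, e4, e5, hs] at h
  change _ = (s0 ⬝ᵥ w) * _ + (s1 ⬝ᵥ w) * _ + (s2 ⬝ᵥ w) * _ + (s3 ⬝ᵥ w) * _
    + (a ⬝ᵥ w) * _ + (b ⬝ᵥ w) * _ at h
  rw [h0, h1, h2, h3, ← hw, ← hw, ← hw] at h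
  linarith

/-- A rank factorization of the slack matrix. -/
lemma factor (S : Matrix (Fin 14) (Fin 94) ℝ) (h : S.rank = 6) :
    ∃ (v : Fin 14 → Fin 6 → ℝ) (w : Fin 94 → Fin 6 → ℝ), ∀ i j, S i j = v i ⬝ᵥ w j := by
  rw [Matrix.rank_eq_finrank_span_row] at h
  let B := Module.finBasisOfFinrankEq ℝ _ h
  refine ⟨fun i => B.repr ⟨S i, Submodule.subset_span ⟨i, rfl⟩⟩, fun j k => (B k).1 j,
    fun i j => ?_⟩
  have e := B.sum_repr ⟨S i, Submodule.subset_span ⟨i, rfl⟩⟩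
  have e2 := congrFun (congrArg Subtype.val e) j
  refine Eq.trans (show S i j = _ from e2.symm) ?_
  rw [Submodule.coe_sum, Finset.sum_apply]
  rfl

/-- Replacing one vertex off a facet by another one preserves the orientation. -/
lemma step {S : Matrix (Fin 14) (Fin 94) ℝ}
    (hS : ∀ (i : Fin 14) (j : Fin 94),
        (i ∈ facet1963 j → S i j = 0) ∧ (i ∉ facet1963 j → 0 < S i j))
    {v : Fin 14 → Fin 6 → ℝ} {w : Fin 94 → Fin 6 → ℝ} (hvw : ∀ i j, S i j = v i ⬝ᵥ w j)
    {c : ℝ} {r r' : Fin 6 → Fin 14} (h : 0 < c * (of fun q => v (r q)).det)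
    {p : Fin 6} {y : Fin 14} {j : Fin 94}
    (hr : r' = Function.update r p y) (hF : ∀ q, q ≠ p → r q ∈ facet1963 j)
    (hp : r p ∉ facet1963 j) (hy : y ∉ facet1963 j) :
    0 < c * (of fun q => v (r' q)).det := by
  have h1 := cram (fun q => v (r q)) (v y) (w j)
  rw [Finset.sum_eq_single p] at h1
  · have e : Function.update (fun q => v (r q)) p (v y) = fun q => v (r' q) := by
      subst hr; funext q
      by_cases hq : q = p
      · subst hq; simp
      · simp [hq]
    rw [e, ← hvw, ← hvw] at h1
    have a := (hS y j).2 hy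
    have b := (hS (r p) j).2 hp
    have h2 : 0 < S (r p) j * (c * (of fun q => v (r' q)).det) := by
      have := mul_pos h a
      linarith [congrArg (fun z => c * z) h1]
    exact (pos_iff_pos_of_mul_pos h2).1 b
  · intro q _ hq
    rw [← hvw, (hS (r q) j).1 (hF q hq), zero_mul]
  · simp

lemma swp {v : Fin 14 → Fin 6 → ℝ} {c : ℝ} {r r' : Fin 6 → Fin 14}
    (h : 0 < c * (of fun q => v (r q)).det) {i k : Fin 6} (hik : i ≠ k)
    (hr : r' = fun q => r (Equiv.swap i k q)) :
    0 < (-c) * (of fun q => v (r' q)).det := by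
  have := Matrix.det_permute (Equiv.swap i k) (of fun q => v (r q))
  rw [Equiv.Perm.sign_swap hik] at this
  have e : (of fun q => v (r q)).submatrix (Equiv.swap i k) id = of fun q => v (r' q) := by
    subst hr; rfl
  rw [e] at this
  rw [this]
  simpa using h

lemma base_ne {S : Matrix (Fin 14) (Fin 94) ℝ}
    (hS : ∀ (i : Fin 14) (j : Fin 94),
        (i ∈ facet1963 j → S i j = 0) ∧ (i ∉ facet1963 j → 0 < S i j))
    {v : Fin 14 → Fin 6 → ℝ} {w : Fin 94 → Fin 6 → ℝ} (hvw : ∀ i j, S i j = v i ⬝ᵥ w j)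
    (r : Fin 6 → Fin 14) (f : Fin 6 → Fin 94)
    (h0 : ∀ a b, b < a → r a ∈ facet1963 (f b)) (h1 : ∀ a, r a ∉ facet1963 (f a)) :
    (of fun q => v (r q)).det ≠ 0 := by
  intro h
  have e : (of fun q => v (r q)) * (of fun q => w (f q))ᵀ = S.submatrix r f := by
    ext a b
    simp only [submatrix_apply, hvw]
    rfl
  have d := congrArg det e
  rw [det_mul, h, zero_mul, Matrix.det_of_isUpperTriangular] at d
  · have : 0 < ∏ i, S.submatrix r f i i := Finset.prod_pos fun a _ => (hS _ _).2 (h1 a)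
    exact this.ne d
  · intro a b hab
    exact (hS _ _).1 (h0 a b hab)

/-- The prismatoid #1963 of Criado and Santos is not realizable: there is no real `14 × 94`
matrix of rank `6` whose `(i,j)` entry vanishes exactly when vertex `i` lies on facet `j` and
is strictly positive otherwise, i.e. it has no slack matrix of a 5-polytope. -/
theorem stmt9 :
    ¬ ∃ S : Matrix (Fin 14) (Fin 94) ℝ, S.rank = 6 ∧
      ∀ (i : Fin 14) (j : Fin 94),
        (i ∈ facet1963 j → S i j = 0) ∧ (i ∉ facet1963 j → 0 < S i j) := by
  rintro ⟨S, hrank, hS⟩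
  obtain ⟨v, w, hvw⟩ := factor S hrank
  have hne := base_ne hS hvw ![3, 0, 1, 4, 7, 11] ![3, 6, 11, 1, 16, 0] (by decide) (by decide)
  obtain ⟨c, hc⟩ : ∃ c, c = (of fun q => v ((![3, 0, 1, 4, 7, 11] : Fin 6 → Fin 14) q)).det :=
    ⟨_, rfl⟩
  have h0_1_3_4_7_11 : 0 < c * (of fun q => v ((![3, 0, 1, 4, 7, 11] : Fin 6 → Fin 14) q)).det := by
    rw [← hc]; rw [← hc] at hne; exact mul_self_pos.2 hne
  have h0_1_2_3_7_11 : 0 < c * (of fun q => v ((![3, 0, 1, 2, 7, 11] : Fin 6 → Fin 14) q)).det :=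
    step hS hvw h0_1_3_4_7_11 (p := 3) (y := 2) (j := 19) (by decide) (by decide) (by decide) (by decide)
  have h0_1_2_3_4_11 : 0 < c * (of fun q => v ((![3, 0, 1, 4, 2, 11] : Fin 6 → Fin 14) q)).det :=
    step hS hvw h0_1_3_4_7_11 (p := 4) (y := 2) (j := 18) (by decide) (by decide) (by decide) (by decide)
  have h0_1_2_3_4_7 : 0 < c * (of fun q => v ((![3, 0, 1, 4, 2, 7] : Fin 6 → Fin 14) q)).det :=
    step hS hvw h0_1_2_3_4_11 (p := 5) (y := 7) (j := 0) (by decide) (by decide) (by decide) (by decide)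
  have h0_1_2_4_7_11 : 0 < c * (of fun q => v ((![2, 0, 1, 4, 7, 11] : Fin 6 → Fin 14) q)).det :=
    step hS hvw h0_1_3_4_7_11 (p := 0) (y := 2) (j := 3) (by decide) (by decide) (by decide) (by decide)
  have h0_2_4_5_7_11 : 0 < c * (of fun q => v ((![2, 0, 5, 4, 7, 11] : Fin 6 → Fin 14) q)).det :=
    step hS hvw h0_1_2_4_7_11 (p := 2) (y := 5) (j := 11) (by decide) (by decide) (by decide) (by decide)
  have h0_1_2_5_7_11 : 0 < c * (of fun q => v ((![2, 0, 5, 1, 7, 11] : Fin 6 → Fin 14) q)).det :=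
    step hS hvw h0_2_4_5_7_11 (p := 3) (y := 1) (j := 51) (by decide) (by decide) (by decide) (by decide)
  have h0_1_2_3_4_10 : 0 < c * (of fun q => v ((![3, 0, 1, 4, 2, 10] : Fin 6 → Fin 14) q)).det :=
    step hS hvw h0_1_2_3_4_7 (p := 5) (y := 10) (j := 0) (by decide) (by decide) (by decide) (by decide)
  have h0_1_2_3_5_10 : 0 < c * (of fun q => v ((![3, 0, 1, 5, 2, 10] : Fin 6 → Fin 14) q)).det :=
    step hS hvw h0_1_2_3_4_10 (p := 3) (y := 5) (j := 10) (by decide) (by decide) (by decide) (by decide)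
  have h0_1_2_3_5_7 : 0 < c * (of fun q => v ((![3, 0, 1, 5, 2, 7] : Fin 6 → Fin 14) q)).det :=
    step hS hvw h0_1_2_3_5_10 (p := 5) (y := 7) (j := 0) (by decide) (by decide) (by decide) (by decide)
  have h0_1_4_7_11_12 : 0 < c * (of fun q => v ((![12, 0, 1, 4, 7, 11] : Fin 6 → Fin 14) q)).det :=
    step hS hvw h0_1_3_4_7_11 (p := 0) (y := 12) (j := 3) (by decide) (by decide) (by decide) (by decide)
  have h0_1_4_5_7_12 : 0 < c * (of fun q => v ((![12, 0, 1, 4, 7, 5] : Fin 6 → Fin 14) q)).det :=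
    step hS hvw h0_1_4_7_11_12 (p := 5) (y := 5) (j := 27) (by decide) (by decide) (by decide) (by decide)
  have h0_1_2_4_5_12 : 0 < c * (of fun q => v ((![12, 0, 1, 4, 2, 5] : Fin 6 → Fin 14) q)).det :=
    step hS hvw h0_1_4_5_7_12 (p := 4) (y := 2) (j := 42) (by decide) (by decide) (by decide) (by decide)
  have h0_1_2_4_5_7 : 0 < c * (of fun q => v ((![7, 0, 1, 4, 2, 5] : Fin 6 → Fin 14) q)).det :=
    step hS hvw h0_1_2_4_5_12 (p := 0) (y := 7) (j := 0) (by decide) (by decide) (by decide) (by decide)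
  have g3_4_1 : 0 < (-c) * (of fun q => v ((![0, 3, 1, 4, 2, 7] : Fin 6 → Fin 14) q)).det :=
    swp h0_1_2_3_4_7 (i := 0) (k := 1) (by decide) (by decide)
  have g3_4_2 : 0 < (-(-c)) * (of fun q => v ((![0, 1, 3, 4, 2, 7] : Fin 6 → Fin 14) q)).det :=
    swp g3_4_1 (i := 1) (k := 2) (by decide) (by decide)
  have g3_4_3 : 0 < (-(-(-c))) * (of fun q => v ((![0, 1, 2, 4, 3, 7] : Fin 6 → Fin 14) q)).det :=
    swp g3_4_2 (i := 2) (k := 4) (by decide) (by decide)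
  have g3_4_4 : 0 < (-(-(-(-c)))) * (of fun q => v ((![0, 1, 2, 7, 3, 4] : Fin 6 → Fin 14) q)).det :=
    swp g3_4_3 (i := 3) (k := 5) (by decide) (by decide)
  have g3_5_1 : 0 < (-c) * (of fun q => v ((![0, 3, 1, 5, 2, 7] : Fin 6 → Fin 14) q)).det :=
    swp h0_1_2_3_5_7 (i := 0) (k := 1) (by decide) (by decide)
  have g3_5_2 : 0 < (-(-c)) * (of fun q => v ((![0, 1, 3, 5, 2, 7] : Fin 6 → Fin 14) q)).det :=
    swp g3_5_1 (i := 1) (k := 2) (by decide) (by decide)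
  have g3_5_3 : 0 < (-(-(-c))) * (of fun q => v ((![0, 1, 2, 5, 3, 7] : Fin 6 → Fin 14) q)).det :=
    swp g3_5_2 (i := 2) (k := 4) (by decide) (by decide)
  have g3_5_4 : 0 < (-(-(-(-c)))) * (of fun q => v ((![0, 1, 2, 7, 3, 5] : Fin 6 → Fin 14) q)).det :=
    swp g3_5_3 (i := 3) (k := 5) (by decide) (by decide)
  have g3_11_1 : 0 < (-c) * (of fun q => v ((![0, 3, 1, 2, 7, 11] : Fin 6 → Fin 14) q)).det :=
    swp h0_1_2_3_7_11 (i := 0) (k := 1) (by decide) (by decide)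
  have g3_11_2 : 0 < (-(-c)) * (of fun q => v ((![0, 1, 3, 2, 7, 11] : Fin 6 → Fin 14) q)).det :=
    swp g3_11_1 (i := 1) (k := 2) (by decide) (by decide)
  have g3_11_3 : 0 < (-(-(-c))) * (of fun q => v ((![0, 1, 2, 3, 7, 11] : Fin 6 → Fin 14) q)).det :=
    swp g3_11_2 (i := 2) (k := 3) (by decide) (by decide)
  have g3_11_4 : 0 < (-(-(-(-c)))) * (of fun q => v ((![0, 1, 2, 7, 3, 11] : Fin 6 → Fin 14) q)).det :=
    swp g3_11_3 (i := 3) (k := 4) (by decide) (by decide)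
  have g4_5_1 : 0 < (-c) * (of fun q => v ((![0, 7, 1, 4, 2, 5] : Fin 6 → Fin 14) q)).det :=
    swp h0_1_2_4_5_7 (i := 0) (k := 1) (by decide) (by decide)
  have g4_5_2 : 0 < (-(-c)) * (of fun q => v ((![0, 1, 7, 4, 2, 5] : Fin 6 → Fin 14) q)).det :=
    swp g4_5_1 (i := 1) (k := 2) (by decide) (by decide)
  have g4_5_3 : 0 < (-(-(-c))) * (of fun q => v ((![0, 1, 2, 4, 7, 5] : Fin 6 → Fin 14) q)).det :=
    swp g4_5_2 (i := 2) (k := 4) (by decide) (by decide)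
  have g4_5_4 : 0 < (-(-(-(-c)))) * (of fun q => v ((![0, 1, 2, 7, 4, 5] : Fin 6 → Fin 14) q)).det :=
    swp g4_5_3 (i := 3) (k := 4) (by decide) (by decide)
  have g4_11_1 : 0 < (-c) * (of fun q => v ((![0, 2, 1, 4, 7, 11] : Fin 6 → Fin 14) q)).det :=
    swp h0_1_2_4_7_11 (i := 0) (k := 1) (by decide) (by decide)
  have g4_11_2 : 0 < (-(-c)) * (of fun q => v ((![0, 1, 2, 4, 7, 11] : Fin 6 → Fin 14) q)).det :=
    swp g4_11_1 (i := 1) (k := 2) (by decide) (by decide)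
  have g4_11_3 : 0 < (-(-(-c))) * (of fun q => v ((![0, 1, 2, 7, 4, 11] : Fin 6 → Fin 14) q)).det :=
    swp g4_11_2 (i := 3) (k := 4) (by decide) (by decide)
  have g5_11_1 : 0 < (-c) * (of fun q => v ((![0, 2, 5, 1, 7, 11] : Fin 6 → Fin 14) q)).det :=
    swp h0_1_2_5_7_11 (i := 0) (k := 1) (by decide) (by decide)
  have g5_11_2 : 0 < (-(-c)) * (of fun q => v ((![0, 1, 5, 2, 7, 11] : Fin 6 → Fin 14) q)).det :=
    swp g5_11_1 (i := 1) (k := 3) (by decide) (by decide)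
  have g5_11_3 : 0 < (-(-(-c))) * (of fun q => v ((![0, 1, 2, 5, 7, 11] : Fin 6 → Fin 14) q)).det :=
    swp g5_11_2 (i := 2) (k := 3) (by decide) (by decide)
  have g5_11_4 : 0 < (-(-(-(-c)))) * (of fun q => v ((![0, 1, 2, 7, 5, 11] : Fin 6 → Fin 14) q)).det :=
    swp g5_11_3 (i := 3) (k := 4) (by decide) (by decide)
  have hv : ∀ a b : Fin 14, (of fun q => v ((![0, 1, 2, 7, a, b] : Fin 6 → Fin 14) q))
      = of ![v 0, v 1, v 2, v 7, v a, v b] := by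
    intro a b; ext i j; fin_cases i <;> rfl
  have hpl := plucker (v 0) (v 1) (v 2) (v 7) (v 3) (v 4) (v 5) (v 11)
  simp only [← hv] at hpl
  have p1 := mul_pos g3_4_4 g5_11_4
  have p2 := mul_pos g3_5_4 g4_11_3
  have p3 := mul_pos g3_11_4 g4_5_4
  linarith [congrArg (fun z => c * c * z) hpl]
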